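/- Let f : ℝ^{d×d} × ℝ → ℝ be C³ satisfying |f_F(z₁,z₂)| ≤ c(1 + |z₁|^{p-1} + |z₂|^{q(p-1)/p}) and |f_η(z₁,z₂)| ≤ c(1 + |z₁|^{p(q-1)/q} + |z₂|^{q-1}), with p, q ≥ 2. Then for every K > 0 and δ > 0 there exists R = R(δ,f,K) > 0 such that for all (λ₁,λ₂), (μ₁,μ₂) with |λ₁|+|λ₂| ≤ K, |μ₁|+|μ₂| ≤ K and |(λ₁,λ₂) − (μ₁,μ₂)| < R, and all (ξ₁,ξ₂): |f(λ₁+ξ₁, λ₂+ξ₂ | λ₁, λ₂) − f(μ₁+ξ₁, μ₂+ξ₂ | μ₁, μ₂)| ≤ δ (|V_p(ξ₁)|² + |V_q(ξ₂)|²). -/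

import Mathlib

theorem aux_shift {E F : Type*} [NormedAddCommGroup E] [NormedSpace ℝ E]
    [NormedAddCommGroup F] [NormedSpace ℝ F] (g : E → F) (a y : E)
    (hg : DifferentiableAt ℝ g (a + y)) :
    HasFDerivAt (fun x => g (a + x)) (fderiv ℝ g (a + y)) y :=
  (hasFDerivAt_comp_add_left a).2 hg.hasFDerivAt

theorem aux_unif {E F : Type*} [NormedAddCommGroup E] [ProperSpace E]
    [NormedAddCommGroup F] (g : E → F) (hg : Continuous g) (K ε : ℝ) (hε : 0 < ε) :
    ∃ r > 0, ∀ x ∈ Metric.closedBall (0:E) K, ∀ y ∈ Metric.closedBall (0:E) K,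
      dist x y < r → dist (g x) (g y) < ε :=
  Metric.uniformContinuousOn_iff.1
    ((isCompact_closedBall (0:E) K).uniformContinuousOn_of_continuous hg.continuousOn) ε hε

theorem aux_small {E : Type*} [NormedAddCommGroup E] [NormedSpace ℝ E] [ProperSpace E]
    (f : E → ℝ) (hf : ContDiff ℝ 3 f) (K ε : ℝ) (hε : 0 < ε) :
    ∃ r > 0, ∀ l m : E, ‖l‖ ≤ K → ‖m‖ ≤ K → ‖l - m‖ < r →
      ‖fderiv ℝ f l - fderiv ℝ f m‖ ≤ ε ∧ ∀ ξ : E, ‖ξ‖ ≤ 1 →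
        |(f (l + ξ) - f l - fderiv ℝ f l ξ) - (f (m + ξ) - f m - fderiv ℝ f m ξ)|
          ≤ ε * ‖ξ‖ ^ 2 := by
  have h1 : ContDiff ℝ 2 (fderiv ℝ f) := hf.fderiv_right (by norm_num)
  have h2 : ContDiff ℝ 1 (fderiv ℝ (fderiv ℝ f)) := h1.fderiv_right (by norm_num)
  have hd0 : Differentiable ℝ f := hf.differentiable (by norm_num)
  have hd1 : Differentiable ℝ (fderiv ℝ f) := h1.differentiable (by norm_num)
  obtain ⟨r1, hr1, H1⟩ := aux_unif (fderiv ℝ f) h1.continuous (K + 1) ε hε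
  obtain ⟨r2, hr2, H2⟩ := aux_unif (F := E →L[ℝ] E →L[ℝ] ℝ) (fderiv ℝ (fderiv ℝ f))
    h2.continuous (K + 1) ε hε
  refine ⟨min r1 r2, lt_min hr1 hr2, fun l m hl hm hlm => ⟨?_, fun ξ hξ => ?_⟩⟩
  · have := H1 l (by simp; linarith) m (by simp; linarith)
      (by rw [dist_eq_norm]; exact hlm.trans_le (min_le_left _ _))
    rw [dist_eq_norm] at this
    exact this.le
  · have key : ∀ x ∈ Metric.closedBall (0:E) ‖ξ‖,
        ‖(fderiv ℝ f (l + x) - fderiv ℝ f (m + x)) - (fderiv ℝ f l - fderiv ℝ f m)‖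
          ≤ ε * ‖ξ‖ := by
      intro x hx
      have hx' : ‖x‖ ≤ ‖ξ‖ := by simpa using hx
      have := (convex_closedBall (0:E) ‖ξ‖).norm_image_sub_le_of_norm_hasFDerivWithin_le
        (f := fun x => fderiv ℝ f (l + x) - fderiv ℝ f (m + x))
        (f' := fun x => fderiv ℝ (fderiv ℝ f) (l + x) - fderiv ℝ (fderiv ℝ f) (m + x))
        (C := ε) (x := 0) (y := x)
        (fun y _ => ((aux_shift _ l y (hd1 (l + y))).sub
          (aux_shift _ m y (hd1 (m + y)))).hasFDerivWithinAt)
        (fun y hy => by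
          have hy' : ‖y‖ ≤ ‖ξ‖ := by simpa using hy
          have := H2 (l+y) (by simp; linarith [norm_add_le l y]) (m+y)
            (by simp; linarith [norm_add_le m y])
            (by rw [dist_eq_norm, add_sub_add_right_eq_sub]
                exact hlm.trans_le (min_le_right _ _))
          rw [dist_eq_norm] at this
          exact this.le) (by simp) hx
      simp only [add_zero, sub_zero] at this
      exact this.trans (by gcongr)
    have := (convex_closedBall (0:E) ‖ξ‖).norm_image_sub_le_of_norm_hasFDerivWithin_le'
        (f := fun x => f (l + x) - f (m + x))
        (f' := fun x => fderiv ℝ f (l + x) - fderiv ℝ f (m + x))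
        (C := ε * ‖ξ‖) (x := 0) (y := ξ) (φ := fderiv ℝ f l - fderiv ℝ f m)
        (fun y _ => ((aux_shift _ l y (hd0 (l + y))).sub
          (aux_shift _ m y (hd0 (m + y)))).hasFDerivWithinAt)
        key (by simp) (by simp)
    simp only [add_zero, sub_zero, ContinuousLinearMap.sub_apply, Real.norm_eq_abs] at this
    calc _ = |f (l + ξ) - f (m + ξ) - (f l - f m) - ((fderiv ℝ f l) ξ - (fderiv ℝ f m) ξ)| := by
          congr 1; ring
      _ ≤ _ := this
      _ = _ := by ring

theorem aux_pow_le (a s t : ℝ) (ha : 0 ≤ a) (hs : 0 ≤ s) (hst : s ≤ t) : a ^ s ≤ 1 + a ^ t := by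
  rcases le_total a 1 with h | h
  · linarith [Real.rpow_le_one ha h hs, Real.rpow_nonneg ha t]
  · linarith [Real.rpow_le_rpow_of_exponent_le h hst]

theorem aux_add_pow (a b t : ℝ) (ha : 0 ≤ a) (hb : 0 ≤ b) (ht : 0 ≤ t) :
    (a + b) ^ t ≤ (2 * a) ^ t + 2 ^ t * b ^ t := by
  rw [← Real.mul_rpow (by norm_num) hb]
  have h1 : 0 ≤ (2 * a) ^ t := by positivity
  have h2 : 0 ≤ (2 * b) ^ t := by positivity
  rcases le_total a b with h | h
  · linarith [Real.rpow_le_rpow (by positivity) (show a + b ≤ 2 * b by linarith) ht]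
  · linarith [Real.rpow_le_rpow (by positivity) (show a + b ≤ 2 * a by linarith) ht]

theorem aux_growth {E : Type*} [NormedAddCommGroup E] [NormedSpace ℝ E]
    (p q c : ℝ) (hp : 2 ≤ p) (hq : 2 ≤ q) (hc : 0 < c)
    (g : E × ℝ → ((E × ℝ) →L[ℝ] ℝ))
    (hgrF : ∀ (z : E × ℝ) (v : E),
      |g z (v, 0)| ≤ c * (1 + ‖z.1‖ ^ (p - 1) + |z.2| ^ (q * (p - 1) / p)) * ‖v‖)
    (hgrη : ∀ z : E × ℝ,
      |g z (0, 1)| ≤ c * (1 + ‖z.1‖ ^ (p * (q - 1) / q) + |z.2| ^ (q - 1)))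
    (K : ℝ) (hK : 0 < K) :
    ∃ C > 0, ∀ z ξ : E × ℝ, ‖z.1‖ ≤ K + ‖ξ.1‖ → |z.2| ≤ K + |ξ.2| →
      ‖g z‖ ≤ C * (1 + ‖ξ.1‖ ^ p + |ξ.2| ^ q) := by
  have A1 : 0 ≤ (2 * K) ^ p := by positivity
  have A2 : 0 ≤ (2 * K) ^ q := by positivity
  have A3 : 0 ≤ (2:ℝ) ^ p := by positivity
  have A4 : 0 ≤ (2:ℝ) ^ q := by positivity
  refine ⟨c * (6 + 2 * (2 * K) ^ p + 2 * (2 * K) ^ q + 2 * 2 ^ p + 2 * 2 ^ q),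
    by positivity, fun z ξ h1 h2 => ?_⟩
  have e1 : 0 ≤ q * (p - 1) / p := div_nonneg (mul_nonneg (by linarith) (by linarith)) (by linarith)
  have e2 : 0 ≤ p * (q - 1) / q := div_nonneg (mul_nonneg (by linarith) (by linarith)) (by linarith)
  have e3 : q * (p - 1) / p ≤ q := by rw [div_le_iff₀ (by linarith)]; nlinarith
  have e4 : p * (q - 1) / q ≤ p := by rw [div_le_iff₀ (by linarith)]; nlinarith
  have b1 := aux_pow_le ‖z.1‖ (p-1) p (norm_nonneg _) (by linarith) (by linarith)
  have b2 := aux_pow_le |z.2| _ q (abs_nonneg _) e1 e3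
  have b3 := aux_pow_le ‖z.1‖ _ p (norm_nonneg _) e2 e4
  have b4 := aux_pow_le |z.2| (q-1) q (abs_nonneg _) (by linarith) (by linarith)
  have c1 := (Real.rpow_le_rpow (norm_nonneg _) h1 (by linarith : 0 ≤ p)).trans
    (aux_add_pow K ‖ξ.1‖ p hK.le (norm_nonneg _) (by linarith))
  have c2 := (Real.rpow_le_rpow (abs_nonneg _) h2 (by linarith : 0 ≤ q)).trans
    (aux_add_pow K |ξ.2| q hK.le (abs_nonneg _) (by linarith))
  have X1 : 0 ≤ ‖ξ.1‖ ^ p := by positivity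
  have X2 : 0 ≤ |ξ.2| ^ q := by positivity
  have Z1 : 0 ≤ ‖z.1‖ ^ p := by positivity
  have Z2 : 0 ≤ |z.2| ^ q := by positivity
  have main : ‖g z‖ ≤ c * (6 + 2 * ‖z.1‖ ^ p + 2 * |z.2| ^ q) := by
    refine ContinuousLinearMap.opNorm_le_bound _ (by positivity) fun v => ?_
    have hv : g z v = g z (v.1, 0) + v.2 * g z (0, 1) := by
      rw [← smul_eq_mul, ← map_smul, ← map_add]; congr 1; ext <;> simp
    have hv1 : ‖v.1‖ ≤ ‖v‖ := norm_fst_le v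
    have hv2 : |v.2| ≤ ‖v‖ := norm_snd_le v
    have t1 : |g z (v.1, 0)| ≤ c * (3 + ‖z.1‖ ^ p + |z.2| ^ q) * ‖v‖ :=
      (hgrF z v.1).trans (mul_le_mul (mul_le_mul_of_nonneg_left (by linarith) hc.le) hv1
        (norm_nonneg _) (by positivity))
    have t2 : |v.2 * g z (0, 1)| ≤ ‖v‖ * (c * (3 + ‖z.1‖ ^ p + |z.2| ^ q)) := by
      rw [abs_mul]
      have := (hgrη z).trans (show _ ≤ c * (3 + ‖z.1‖ ^ p + |z.2| ^ q) from mul_le_mul_of_nonneg_left (by linarith) hc.le)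
      gcongr
    rw [hv, Real.norm_eq_abs]
    refine (abs_add_le _ _).trans ((add_le_add t1 t2).trans (le_of_eq (by ring)))
  refine main.trans ?_
  rw [mul_assoc]
  gcongr
  nlinarith [mul_nonneg A1 X1, mul_nonneg A1 X2, mul_nonneg A2 X1, mul_nonneg A2 X2,
    mul_nonneg A3 X1, mul_nonneg A3 X2, mul_nonneg A4 X1, mul_nonneg A4 X2]

theorem aux_main {E : Type*} [NormedAddCommGroup E] [NormedSpace ℝ E] [ProperSpace E]
    (p q c : ℝ) (hp : 2 ≤ p) (hq : 2 ≤ q) (hc : 0 < c)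
    (f : E × ℝ → ℝ) (hf : ContDiff ℝ 3 f)
    (hgrF : ∀ (z : E × ℝ) (v : E),
      |fderiv ℝ f z (v, 0)| ≤ c * (1 + ‖z.1‖ ^ (p - 1) + |z.2| ^ (q * (p - 1) / p)) * ‖v‖)
    (hgrη : ∀ z : E × ℝ,
      |fderiv ℝ f z (0, 1)| ≤ c * (1 + ‖z.1‖ ^ (p * (q - 1) / q) + |z.2| ^ (q - 1)))
    (K δ : ℝ) (hK : 0 < K) (hδ : 0 < δ) :
    ∃ R > 0, ∀ l m ξ : E × ℝ, ‖l‖ ≤ K → ‖m‖ ≤ K → ‖l - m‖ < R →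
      |(f (l + ξ) - f l - fderiv ℝ f l ξ) - (f (m + ξ) - f m - fderiv ℝ f m ξ)|
        ≤ δ * ((‖ξ.1‖ ^ p + ‖ξ.1‖ ^ (2:ℝ)) + (|ξ.2| ^ q + |ξ.2| ^ (2:ℝ))) := by
  obtain ⟨C, hC, HC⟩ := aux_growth p q c hp hq hc (fderiv ℝ f) hgrF hgrη K hK
  obtain ⟨r, hr, Hr⟩ := aux_small f hf K (δ / 2) (by positivity)
  have hd0 : Differentiable ℝ f := hf.differentiable (by norm_num)
  refine ⟨min r (δ / (6 * C)), lt_min hr (by positivity), fun l m ξ hl hm hlm => ?_⟩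
  obtain ⟨G1, G2⟩ := Hr l m hl hm (hlm.trans_le (min_le_left _ _))
  have hlm2 : ‖l - m‖ ≤ δ / (6 * C) := (hlm.trans_le (min_le_right _ _)).le
  have X1 : 0 ≤ ‖ξ.1‖ ^ p := by positivity
  have X2 : 0 ≤ |ξ.2| ^ q := by positivity
  simp only [Real.rpow_two]
  have hsq : ‖ξ‖ ^ 2 ≤ ‖ξ.1‖ ^ 2 + |ξ.2| ^ 2 := by
    rw [Prod.norm_def]
    rcases max_choice ‖ξ.1‖ ‖ξ.2‖ with h | h <;> rw [h] <;>
      try simp only [Real.norm_eq_abs]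
    all_goals nlinarith [sq_nonneg ‖ξ.1‖, sq_nonneg |ξ.2|]
  rcases le_or_gt ‖ξ‖ 1 with hξ | hξ
  · refine (G2 ξ hξ).trans ?_
    have : δ / 2 ≤ δ := by linarith
    gcongr
    linarith
  · have hW : 1 ≤ ‖ξ.1‖ ^ p + |ξ.2| ^ q := by
      rw [Prod.norm_def, lt_max_iff] at hξ
      rcases hξ with h | h
      · linarith [Real.one_le_rpow h.le (by linarith : 0 ≤ p)]
      · rw [Real.norm_eq_abs] at h
        linarith [Real.one_le_rpow h.le (by linarith : 0 ≤ q)]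
    have diff : ∀ x : E × ℝ,
        |f (l + x) - f (m + x)| ≤ C * (1 + ‖x.1‖ ^ p + |x.2| ^ q) * ‖l - m‖ := by
      intro x
      have hcv : Convex ℝ ((fun z : E × ℝ => z + x) '' Metric.closedBall (0 : E × ℝ) K) := by
        have := (convex_closedBall (0 : E × ℝ) K).vadd x
        simpa [add_comm] using (convex_closedBall (0 : E × ℝ) K).translate x
      have := hcv.norm_image_sub_le_of_norm_fderiv_le (𝕜 := ℝ) (f := f)
        (C := C * (1 + ‖x.1‖ ^ p + |x.2| ^ q)) (x := m + x) (y := l + x)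
        (fun z _ => hd0 z)
        (by
          rintro _ ⟨y, hy, rfl⟩
          have hy' : ‖y‖ ≤ K := by simpa using hy
          have a1 := norm_fst_le y
          have a2 : |y.2| ≤ ‖y‖ := norm_snd_le y
          apply HC
          · exact (norm_add_le _ _).trans (by linarith)
          · exact (abs_add_le _ _).trans (by linarith))
        ⟨m, by simpa using hm, rfl⟩ ⟨l, by simpa using hl, rfl⟩
      simpa using this
    have d1 := diff ξ
    have d2 := diff 0
    have z1 : (0:ℝ) ^ p = 0 := Real.zero_rpow (by linarith)
    have z2 : (0:ℝ) ^ q = 0 := Real.zero_rpow (by linarith)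
    simp only [add_zero, Prod.fst_zero, Prod.snd_zero, norm_zero, abs_zero, z1, z2, mul_one] at d2
    have d3 : |fderiv ℝ f l ξ - fderiv ℝ f m ξ| ≤ δ / 2 * ‖ξ‖ ^ 2 := by
      have := (fderiv ℝ f l - fderiv ℝ f m).le_of_opNorm_le G1 ξ
      rw [ContinuousLinearMap.sub_apply, Real.norm_eq_abs] at this
      refine this.trans ?_
      gcongr
      nlinarith
    have hCR : C * ‖l - m‖ ≤ δ / 6 := by
      calc C * ‖l - m‖ ≤ C * (δ / (6 * C)) := by gcongr
        _ = δ / 6 := by field_simp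
    set W := ‖ξ.1‖ ^ p + |ξ.2| ^ q with hWdef
    have d1' : |f (l + ξ) - f (m + ξ)| ≤ δ / 6 * (2 * W) := by
      refine d1.trans ?_
      calc _ = (C * ‖l - m‖) * (1 + W) := by rw [hWdef]; ring
        _ ≤ δ / 6 * (2 * W) := by gcongr; linarith
    have d2' : |f l - f m| ≤ δ / 6 * W := by
      refine (d2.trans hCR).trans ?_
      nlinarith
    have d3' : |fderiv ℝ f l ξ - fderiv ℝ f m ξ| ≤ δ / 2 * (‖ξ.1‖ ^ 2 + |ξ.2| ^ 2) :=
      d3.trans (by gcongr)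
    have hS : 0 ≤ δ * (‖ξ.1‖ ^ 2 + |ξ.2| ^ 2) := by positivity
    have fin : δ * (‖ξ.1‖ ^ p + ‖ξ.1‖ ^ 2 + (|ξ.2| ^ q + |ξ.2| ^ 2))
        = δ * W + δ * (‖ξ.1‖ ^ 2 + |ξ.2| ^ 2) := by rw [hWdef]; ring
    rw [fin]
    have hdW : 0 ≤ δ * W := by positivity
    rw [abs_le] at d1' d2' d3' ⊢
    constructor <;> linarith [d1'.1, d1'.2, d2'.1, d2'.2, d3'.1, d3'.2]


/-- The space of `d×d` matrices, modelled as linear maps on `ℝ^d`. -/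
abbrev MatSp (d : ℕ) := EuclideanSpace ℝ (Fin d) →L[ℝ] EuclideanSpace ℝ (Fin d)

/-- Lemma 2(b): uniform continuity of the relative function
`f(λ+ξ | λ) := f(λ+ξ) − f(λ) − f_F(λ)·ξ₁ − f_η(λ)ξ₂` in its base point on compact
sets, measured against the weight `|V_p(ξ₁)|² + |V_q(ξ₂)|²`. -/
theorem relative_function_base_point_continuity
    (d : ℕ) (p q c : ℝ) (hp : 2 ≤ p) (hq : 2 ≤ q) (hc : 0 < c)
    (f : (MatSp d × ℝ) → ℝ) (fF : (MatSp d × ℝ) → (MatSp d →L[ℝ] ℝ))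
    (fη : (MatSp d × ℝ) → ℝ)
    (hf : ContDiff ℝ 3 f)
    (hfF : ∀ z : MatSp d × ℝ, HasFDerivAt (fun w => f (w, z.2)) (fF z) z.1)
    (hfη : ∀ z : MatSp d × ℝ, HasDerivAt (fun t => f (z.1, t)) (fη z) z.2)
    (hgrF : ∀ z : MatSp d × ℝ,
      ‖fF z‖ ≤ c * (1 + ‖z.1‖ ^ (p - 1) + |z.2| ^ (q * (p - 1) / p)))
    (hgrη : ∀ z : MatSp d × ℝ,
      |fη z| ≤ c * (1 + ‖z.1‖ ^ (p * (q - 1) / q) + |z.2| ^ (q - 1))) :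
    ∀ K > 0, ∀ δ > 0, ∃ R > 0, ∀ (l1 m1 ξ1 : MatSp d) (l2 m2 ξ2 : ℝ),
      ‖l1‖ + |l2| ≤ K → ‖m1‖ + |m2| ≤ K → ‖l1 - m1‖ + |l2 - m2| < R →
      |(f (l1 + ξ1, l2 + ξ2) - f (l1, l2) - fF (l1, l2) ξ1 - fη (l1, l2) * ξ2)
        - (f (m1 + ξ1, m2 + ξ2) - f (m1, m2) - fF (m1, m2) ξ1 - fη (m1, m2) * ξ2)|
        ≤ δ * ((‖ξ1‖ ^ p + ‖ξ1‖ ^ (2:ℝ)) + (|ξ2| ^ q + |ξ2| ^ (2:ℝ))) := by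
  intro K hK δ hδ
  have hd0 : Differentiable ℝ f := hf.differentiable (by norm_num)
  have eF : ∀ (z : MatSp d × ℝ) (v : MatSp d), fderiv ℝ f z (v, 0) = fF z v := by
    intro z v
    have h := HasFDerivAt.comp (g := f) (f := fun e => (e, z.2)) z.1 (hd0 z).hasFDerivAt
      (hasFDerivAt_prodMk_left (𝕜 := ℝ) z.1 z.2)
    have := h.unique (hfF z)
    rw [← this]; simp
  have eη : ∀ z : MatSp d × ℝ, fderiv ℝ f z (0, 1) = fη z := by
    intro z
    have h := (HasFDerivAt.comp (g := f) (f := fun t => (z.1, t)) z.2 (hd0 z).hasFDerivAt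
      (hasFDerivAt_prodMk_right (𝕜 := ℝ) z.1 z.2)).hasDerivAt
    have := h.unique (hfη z)
    rw [← this]; simp
  have eA : ∀ (z : MatSp d × ℝ) (v : MatSp d) (t : ℝ),
      fderiv ℝ f z (v, t) = fF z v + fη z * t := by
    intro z v t
    rw [← eF, ← eη, mul_comm, ← smul_eq_mul, ← map_smul, ← map_add]; congr 1; ext <;> simp
  obtain ⟨R, hR, H⟩ := aux_main p q c hp hq hc f hf
    (fun z v => by rw [eF]; exact (fF z).le_of_opNorm_le (hgrF z) v)
    (fun z => by rw [eη]; exact hgrη z) K δ hK hδ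
  refine ⟨R, hR, fun l1 m1 ξ1 l2 m2 ξ2 hl hm hlm => ?_⟩
  have nle : ∀ (a : MatSp d) (b : ℝ), ‖(a, b)‖ ≤ ‖a‖ + |b| := fun a b => by
    rw [Prod.norm_def]
    exact max_le (by simp) (by simp)
  have := H (l1, l2) (m1, m2) (ξ1, ξ2) ((nle _ _).trans hl) ((nle _ _).trans hm)
    ((nle _ _).trans_lt hlm)
  simpa only [eA, Prod.mk_add_mk, sub_add_eq_sub_sub] using this
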